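/- arXiv:1609.05942 — 9 statements merged into one kernel-verified Lean document; each statement's English description precedes it below -/
import Mathlib

section
/- Let F be a field, n : ℕ, τ a type, j : τ, and let f ∈ Polynomial F have odd natDegree at least 3. Then for every projection substitution θ : Option (Fin n × Fin n) → MvPolynomial τ F, we have MvPolynomial.aeval θ P_n ≠ Polynomial.aeval (MvPolynomial.X j) f. In other words, no univariate polynomial of odd degree at least 3 (viewed as a multivariate polynomial in the single variable j) is a projection of P_n. -/
open scoped BigOperators

open Classical in
/-- The set of all `n`-cycles in `Equiv.Perm (Fin n)`. -/
noncomputable def nCycles (n : ℕ) : Finset (Equiv.Perm (Fin n)) :=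
  Finset.univ.filter fun π => π.IsCycle ∧ π.support = Finset.univ

/-- The Hamiltonian cycle polynomial `HC_n`. -/
noncomputable def HC (R : Type*) [CommRing R] (n : ℕ) : MvPolynomial (Fin n × Fin n) R :=
  ∑ π ∈ nCycles n, ∏ i : Fin n, MvPolynomial.X (i, π i)

/-- `P_n := X ⬝ HC_n + HC_n²` with a fresh variable `X = X none`,
where `hc_n` is `HC_n` renamed along `(i,j) ↦ some (i,j)`. -/
noncomputable def P (R : Type*) [CommRing R] (n : ℕ) :
    MvPolynomial (Option (Fin n × Fin n)) R :=
  MvPolynomial.X none * MvPolynomial.rename some (HC R n)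
    + (MvPolynomial.rename some (HC R n)) ^ 2

/-- A projection substitution sends each variable to a variable or a constant. -/
def IsProjection {σ τ F : Type*} [CommSemiring F] (θ : σ → MvPolynomial τ F) : Prop :=
  ∀ v : σ, (∃ k : τ, θ v = MvPolynomial.X k) ∨ (∃ c : F, θ v = MvPolynomial.C c)

/-- No univariate polynomial of odd degree at least `3` is a projection of `P_n`. -/
theorem stmt2 {F : Type*} [Field F] (n : ℕ) (τ : Type*) (j : τ) (f : Polynomial F)
    (hodd : Odd f.natDegree) (hdeg : 3 ≤ f.natDegree)
    (θ : Option (Fin n × Fin n) → MvPolynomial τ F) (hθ : IsProjection θ) :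
    MvPolynomial.aeval θ (P F n) ≠ Polynomial.aeval (MvPolynomial.X j) f := by
  intro h
  have h2 := congrArg (MvPolynomial.aeval (fun _ : τ => (Polynomial.X : Polynomial F))) h
  have hf : MvPolynomial.aeval (fun _ : τ => (Polynomial.X : Polynomial F))
      (Polynomial.aeval (MvPolynomial.X j : MvPolynomial τ F) f) = f := by
    rw [← Polynomial.aeval_algHom_apply, MvPolynomial.aeval_X, Polynomial.aeval_X_left_apply]
  rw [hf] at h2
  simp only [P, map_add, map_mul, map_pow, MvPolynomial.aeval_X] at h2
  generalize MvPolynomial.aeval (fun _ : τ => (Polynomial.X : Polynomial F))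
    (MvPolynomial.aeval θ (MvPolynomial.rename some (HC F n))) = q at h2
  have hy : (MvPolynomial.aeval (fun _ : τ => (Polynomial.X : Polynomial F))
      (θ none)).natDegree ≤ 1 := by
    rcases hθ none with ⟨k, hk⟩ | ⟨c, hc⟩
    · rw [hk, MvPolynomial.aeval_X]
      exact Polynomial.natDegree_X_le
    · rw [hc, MvPolynomial.aeval_C]
      simp
  generalize MvPolynomial.aeval (fun _ : τ => (Polynomial.X : Polynomial F)) (θ none) = y at h2 hy
  have h3 : (y + q) * q = f := by rw [← h2]; ring
  have hf0 : f ≠ 0 := by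
    rintro rfl
    simp at hdeg
  have hq : q ≠ 0 := by
    rintro rfl
    exact hf0 (by rw [← h3, mul_zero])
  have hyq : y + q ≠ 0 := by
    intro h0
    exact hf0 (by rw [← h3, h0, zero_mul])
  have hd := Polynomial.natDegree_mul hyq hq
  rw [h3] at hd
  by_cases hlt : y.natDegree < q.natDegree
  · rw [Polynomial.natDegree_add_eq_right_of_natDegree_lt hlt] at hd
    obtain ⟨m, hm⟩ := hodd
    omega
  · have := Polynomial.natDegree_add_le y q
    omega
end

section
/- Let R be a commutative ring, n : ℕ, a ∈ R, i₀ : Fin n, and let s_a be the R-algebra endomorphism of MvPolynomial (Fin n × Fin n) R determined by s_a(X (i,j)) = a • X (i,j) if i = i₀ and s_a(X (i,j)) = X (i,j) otherwise (scaling row i₀ by a). Then s_a(Q_n) − a^2 • Q_n = (a − a^2) • HC_n. -/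
open scoped BigOperators

/-- `HC_n^{(2)}`, with every variable squared. -/
noncomputable def HC2 (R : Type*) [CommRing R] (n : ℕ) : MvPolynomial (Fin n × Fin n) R :=
  ∑ π ∈ nCycles n, ∏ i : Fin n, (MvPolynomial.X (i, π i)) ^ 2

/-- `Q_n := HC_n + HC_n^{(2)}`. -/
noncomputable def Q (R : Type*) [CommRing R] (n : ℕ) : MvPolynomial (Fin n × Fin n) R :=
  HC R n + HC2 R n

/-- If `s_a` scales row `i₀` by `a`, then `s_a(Q_n) − a² • Q_n = (a − a²) • HC_n`. -/
theorem stmt4 {R : Type*} [CommRing R] (n : ℕ) (a : R) (i₀ : Fin n) :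
    MvPolynomial.aeval
        (fun v : Fin n × Fin n =>
          if v.1 = i₀ then a • (MvPolynomial.X v : MvPolynomial (Fin n × Fin n) R)
          else MvPolynomial.X v) (Q R n)
      - a ^ 2 • Q R n = (a - a ^ 2) • HC R n := by
  have key : ∀ π : Equiv.Perm (Fin n),
      ∏ i : Fin n, (if i = i₀ then a • (MvPolynomial.X (i, π i) : MvPolynomial (Fin n × Fin n) R)
        else MvPolynomial.X (i, π i)) = a • ∏ i : Fin n, MvPolynomial.X (i, π i) := by
    intro π
    rw [← Finset.mul_prod_erase _ _ (Finset.mem_univ i₀),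
      ← Finset.mul_prod_erase Finset.univ (fun i => MvPolynomial.X (i, π i))
        (Finset.mem_univ i₀), if_pos rfl, smul_mul_assoc]
    congr 2
    apply Finset.prod_congr rfl
    intro i hi
    rw [if_neg (Finset.ne_of_mem_erase hi)]
  have h1 : MvPolynomial.aeval
        (fun v : Fin n × Fin n =>
          if v.1 = i₀ then a • (MvPolynomial.X v : MvPolynomial (Fin n × Fin n) R)
          else MvPolynomial.X v) (HC R n) = a • HC R n := by
    simp only [HC, map_sum, map_prod, MvPolynomial.aeval_X, key, Finset.smul_sum]
  have h2 : MvPolynomial.aeval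
        (fun v : Fin n × Fin n =>
          if v.1 = i₀ then a • (MvPolynomial.X v : MvPolynomial (Fin n × Fin n) R)
          else MvPolynomial.X v) (HC2 R n) = a ^ 2 • HC2 R n := by
    simp only [HC2, map_sum, map_prod, map_pow, MvPolynomial.aeval_X, Finset.prod_pow, key,
      Finset.smul_sum, smul_pow]
  rw [Q, map_add, h1, h2, smul_add, sub_smul]
  abel
end

section
/- Let F be a field with more than two elements, n : ℕ, and let a ∈ F satisfy a ≠ 0 and a ≠ 1. Let s_a be the F-algebra endomorphism of MvPolynomial (Fin n × Fin n) F determined by s_a(X (i,j)) = a • X (i,j) if i = 0 and s_a(X (i,j)) = X (i,j) otherwise (scaling the first row by a), where for n = 0 take s_a to be the identity. Then for n ≥ 1: HC_n = (a − a^2)⁻¹ • s_a(Q_n) − (a^2 * (a − a^2)⁻¹) • Q_n. In particular, HC_n is an F-linear combination of Q_n and a single linear substitution instance of Q_n. -/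
open scoped BigOperators

/-- A product whose `0`-th factor is scaled by `c`. -/
theorem prod_scale_first {F : Type*} [Field F] {n : ℕ} (hn : 1 ≤ n) (c : F)
    (f : Fin n → MvPolynomial (Fin n × Fin n) F) :
    ∏ i : Fin n, (if i.val = 0 then c • f i else f i) = c • ∏ i : Fin n, f i := by
  obtain ⟨m, rfl⟩ : ∃ m, n = m + 1 := ⟨n - 1, by omega⟩
  simp [Fin.prod_univ_succ]

/-- Over a field with more than two elements, `HC_n` is an explicit linear combination of
`Q_n` and the instance of `Q_n` obtained by scaling the first row by `a ∉ {0, 1}`. -/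
theorem stmt5 {F : Type*} [Field F] (h2 : 2 < Nat.card F ∨ Infinite F)
    (n : ℕ) (hn : 1 ≤ n) (a : F) (ha0 : a ≠ 0) (ha1 : a ≠ 1) :
    HC F n
      = (a - a ^ 2)⁻¹ • MvPolynomial.aeval
          (fun v : Fin n × Fin n =>
            if v.1.val = 0 then a • (MvPolynomial.X v : MvPolynomial (Fin n × Fin n) F)
            else MvPolynomial.X v) (Q F n)
        - (a ^ 2 * (a - a ^ 2)⁻¹) • Q F n := by
  have hne : a - a ^ 2 ≠ 0 := by
    have h : a * (1 - a) ≠ 0 := mul_ne_zero ha0 (sub_ne_zero.mpr (Ne.symm ha1))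
    intro h'
    exact h (by linear_combination h')
  have h1 : MvPolynomial.aeval
      (fun v : Fin n × Fin n =>
        if v.1.val = 0 then a • (MvPolynomial.X v : MvPolynomial (Fin n × Fin n) F)
        else MvPolynomial.X v) (HC F n) = a • HC F n := by
    simp only [HC, map_sum, map_prod, MvPolynomial.aeval_X, Finset.smul_sum]
    refine Finset.sum_congr rfl fun π _ => ?_
    exact prod_scale_first hn a fun i => MvPolynomial.X (i, π i)
  have h3 : MvPolynomial.aeval
      (fun v : Fin n × Fin n =>
        if v.1.val = 0 then a • (MvPolynomial.X v : MvPolynomial (Fin n × Fin n) F)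
        else MvPolynomial.X v) (HC2 F n) = a ^ 2 • HC2 F n := by
    simp only [HC2, map_sum, map_prod, map_pow, MvPolynomial.aeval_X, Finset.smul_sum]
    refine Finset.sum_congr rfl fun π _ => ?_
    rw [← prod_scale_first hn (a ^ 2) fun i => (MvPolynomial.X (i, π i)) ^ 2]
    refine Finset.prod_congr rfl fun i _ => ?_
    split_ifs
    · rw [smul_pow]
    · rfl
  have hk : HC F n = ((a - a ^ 2)⁻¹ * (a - a ^ 2)) • HC F n := by
    rw [inv_mul_cancel₀ hne, one_smul]
  rw [Q, map_add, h1, h3]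
  conv_lhs => rw [hk]
  module
end

section
/- For every n : ℕ, every type τ, every j : τ, and every projection substitution θ : (Fin n × Fin n) → MvPolynomial τ ℝ, we have MvPolynomial.aeval θ Q_n ≠ MvPolynomial.X j. In other words, over the real numbers, no single variable is a projection of Q_n for any n. -/
open scoped BigOperators

/-- Over `ℝ`, no single variable is a projection of `Q_n`. -/
theorem stmt7 (n : ℕ) (τ : Type*) (j : τ)
    (θ : Fin n × Fin n → MvPolynomial τ ℝ) (hθ : IsProjection θ) :
    MvPolynomial.aeval θ (Q ℝ n) ≠ MvPolynomial.X j := by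
  intro h
  set t : ℝ := -((nCycles n).card : ℝ) - 1 with ht
  have h2 := congrArg (MvPolynomial.eval (fun _ : τ => t)) h
  simp only [Q, HC, HC2, map_add, map_sum, map_prod, map_pow, MvPolynomial.aeval_X,
    MvPolynomial.eval_X, Finset.prod_pow] at h2
  rw [← Finset.sum_add_distrib] at h2
  have h3 : ∑ _π ∈ nCycles n, (-1 : ℝ) ≤ t := by
    rw [← h2]
    refine Finset.sum_le_sum fun π _ => ?_
    nlinarith [sq_nonneg ((∏ i, MvPolynomial.eval (fun _ : τ => t) (θ (i, π i))) + 1 / 2)]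
  simp only [Finset.sum_const, nsmul_eq_mul] at h3
  linarith
end

section
/- Let R be a commutative ring and s, t : ℕ with s ≥ 1 and t ≥ 1, and let A : Fin (s+1) → Fin (s+1) → R and B : Fin (t+1) → Fin (t+1) → R be matrices. Then HC(con(A,B)) = HC(A) * HC(B), where con(A,B) is the Hamiltonian connection matrix of A and B. -/
open scoped BigOperators

open Classical in
/-- The Hamiltonian cycle polynomial evaluated at a matrix `A : V → V → R`:
the sum over all full cycles `π` of `∏ v, A v (π v)`. -/
noncomputable def HCval {V R : Type*} [Fintype V] [CommRing R] (A : V → V → R) : R :=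
  ∑ π ∈ Finset.univ.filter (fun π : Equiv.Perm V => π.IsCycle ∧ π.support = Finset.univ),
    ∏ v : V, A v (π v)

open Classical in
/-- `HC^{(2)}` evaluated at a matrix `A : V → V → R`:
the sum over all full cycles `π` of `∏ v, (A v (π v))²`. -/
noncomputable def HC2val {V R : Type*} [Fintype V] [CommRing R] (A : V → V → R) : R :=
  ∑ π ∈ Finset.univ.filter (fun π : Equiv.Perm V => π.IsCycle ∧ π.support = Finset.univ),
    ∏ v : V, (A v (π v)) ^ 2

/-- The Hamiltonian connection matrix `con(A, B)` of two matrices.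
`inl (inr ⋆)` is the in-copy of vertex `0` of `A`, `inl (inl 0)` its out-copy;
symmetrically for `B`. -/
def conn {R : Type*} [CommRing R] {s t : ℕ}
    (A : Fin (s + 1) → Fin (s + 1) → R) (B : Fin (t + 1) → Fin (t + 1) → R) :
    (Fin (s + 1) ⊕ Unit) ⊕ (Fin (t + 1) ⊕ Unit) →
      (Fin (s + 1) ⊕ Unit) ⊕ (Fin (t + 1) ⊕ Unit) → R
  | .inl (.inl i), .inl (.inl j) => if j = 0 then 0 else A i j
  | .inl (.inl i), .inl (.inr _) => A i 0
  | .inl (.inr _), .inr (.inl j) => if j = 0 then 1 else 0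
  | .inr (.inl i), .inr (.inl j) => if j = 0 then 0 else B i j
  | .inr (.inl i), .inr (.inr _) => B i 0
  | .inr (.inr _), .inl (.inl j) => if j = 0 then 1 else 0
  | _, _ => 0

open Classical in
theorem full_iff {V : Type*} [Fintype V] [Nontrivial V] (π : Equiv.Perm V) (x0 : V) :
    (π.IsCycle ∧ π.support = Finset.univ) ↔
      ∀ S : V → Prop, S x0 → (∀ x, S x → S (π x)) → ∀ x, S x := by
  constructor
  · rintro ⟨hc, hsupp⟩ S h0 hS x
    have hm : ∀ y, π y ≠ y := fun y => by
      rw [← Equiv.Perm.mem_support, hsupp]; exact Finset.mem_univ y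
    obtain ⟨n, rfl⟩ := hc.exists_pow_eq (hm x0) (hm x)
    induction n with
    | zero => simpa using h0
    | succ n ih => rw [pow_succ']; exact hS _ ih
  · intro h
    have hn : ∀ x, ∃ n : ℕ, (π ^ n) x0 = x :=
      h (fun x => ∃ n : ℕ, (π ^ n) x0 = x) ⟨0, rfl⟩
        (fun x ⟨n, hx⟩ => ⟨n + 1, by rw [pow_succ', Equiv.Perm.mul_apply, hx]⟩)
    have h0 : π x0 ≠ x0 := by
      intro hx
      obtain ⟨y, hy⟩ := exists_ne x0
      exact hy (h (fun x => x = x0) rfl (fun x hx' => by rw [hx', hx]) y)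
    refine ⟨⟨x0, h0, fun y _ => ?_⟩, ?_⟩
    · obtain ⟨n, hy⟩ := hn y
      exact ⟨n, by simpa using hy⟩
    · ext y
      simp only [Equiv.Perm.mem_support, Finset.mem_univ, iff_true]
      intro hy
      obtain ⟨n, rfl⟩ := hn y
      apply h0
      apply (π ^ n).injective
      rw [← Equiv.Perm.mul_apply, ← pow_succ, pow_succ', Equiv.Perm.mul_apply, hy]

abbrev WW (s t : ℕ) := (Fin (s + 1) ⊕ Unit) ⊕ (Fin (t + 1) ⊕ Unit)

def rho (s t : ℕ) : Equiv.Perm (WW s t) :=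
  Equiv.swap (.inl (.inl 0)) (.inl (.inr ())) * Equiv.swap (.inl (.inr ())) (.inr (.inl 0)) *
    Equiv.swap (.inr (.inl 0)) (.inr (.inr ()))

def glue {s t : ℕ} (p : Equiv.Perm (Fin (s + 1)) × Equiv.Perm (Fin (t + 1))) :
    Equiv.Perm (WW s t) :=
  rho s t * Equiv.sumCongr (Equiv.sumCongr p.1 1) (Equiv.sumCongr p.2 1)

section

variable {s t : ℕ}

theorem rho_a (i : Fin (s + 1)) : rho s t (.inl (.inl i)) =
    if i = 0 then .inl (.inr ()) else .inl (.inl i) := by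
  split_ifs with h <;> simp [rho, Equiv.swap_apply_def, h]

theorem rho_b (i : Fin (t + 1)) : rho s t (.inr (.inl i)) =
    if i = 0 then .inr (.inr ()) else .inr (.inl i) := by
  split_ifs with h <;> simp [rho, Equiv.swap_apply_def, h]

theorem rho_c : rho s t (.inl (.inr ())) = .inr (.inl 0) := by
  simp [rho, Equiv.swap_apply_def]

theorem rho_d : rho s t (.inr (.inr ())) = .inl (.inl 0) := by
  simp [rho, Equiv.swap_apply_def]

variable (p : Equiv.Perm (Fin (s + 1)) × Equiv.Perm (Fin (t + 1)))

theorem glue_a (i : Fin (s + 1)) : glue p (.inl (.inl i)) =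
    if p.1 i = 0 then .inl (.inr ()) else .inl (.inl (p.1 i)) := rho_a _

theorem glue_b (i : Fin (t + 1)) : glue p (.inr (.inl i)) =
    if p.2 i = 0 then .inr (.inr ()) else .inr (.inl (p.2 i)) := rho_b _

theorem glue_c : glue p (.inl (.inr ())) = .inr (.inl 0) := rho_c (s := s) (t := t)

theorem glue_d : glue p (.inr (.inr ())) = .inl (.inl 0) := rho_d (s := s) (t := t)

theorem glue_inj : Function.Injective (glue (s := s) (t := t)) := by
  intro p q h
  have h' := mul_left_cancel h
  apply Prod.ext
  · ext1 i
    have := congrArg (fun e : Equiv.Perm (WW s t) => e (.inl (.inl i))) h'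
    simpa using this
  · ext1 i
    have := congrArg (fun e : Equiv.Perm (WW s t) => e (.inr (.inl i))) h'
    simpa using this

theorem glue_trans
    (h1 : ∀ S : Fin (s + 1) → Prop, S 0 → (∀ x, S x → S (p.1 x)) → ∀ x, S x)
    (h2 : ∀ S : Fin (t + 1) → Prop, S 0 → (∀ x, S x → S (p.2 x)) → ∀ x, S x)
    (S : WW s t → Prop) (h0 : S (.inl (.inl 0))) (hS : ∀ x, S x → S (glue p x)) (x : WW s t) :
    S x := by
  have ha : ∀ i, S (.inl (.inl i)) := by
    refine h1 (fun i => S (.inl (.inl i))) h0 (fun i hi => ?_)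
    have := hS _ hi
    rw [glue_a] at this
    split_ifs at this with h
    · simpa only [h] using h0
    · exact this
  have hc : S (.inl (.inr ())) := by
    have := hS _ (ha (p.1.symm 0))
    rwa [glue_a, if_pos (by simp)] at this
  have h0' : S (.inr (.inl 0)) := by
    have := hS _ hc
    rwa [glue_c] at this
  have hb : ∀ i, S (.inr (.inl i)) := by
    refine h2 (fun i => S (.inr (.inl i))) h0' (fun i hi => ?_)
    have := hS _ hi
    rw [glue_b] at this
    split_ifs at this with h
    · simpa only [h] using h0'
    · exact this
  have hd : S (.inr (.inr ())) := by
    have := hS _ (hb (p.2.symm 0))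
    rwa [glue_b, if_pos (by simp)] at this
  rcases x with (i | ⟨⟩) | (i | ⟨⟩)
  exacts [ha i, hc, hb i, hd]

theorem trans_glue_a
    (h : ∀ S : WW s t → Prop, S (.inl (.inl 0)) → (∀ x, S x → S (glue p x)) → ∀ x, S x)
    (S : Fin (s + 1) → Prop) (h0 : S 0) (hS : ∀ x, S x → S (p.1 x)) (x : Fin (s + 1)) : S x := by
  refine h (fun w => Sum.elim (Sum.elim S (fun _ => True)) (fun _ => True) w) h0 ?_ (.inl (.inl x))
  rintro ((i | ⟨⟩) | (i | ⟨⟩)) hi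
  · rw [glue_a]; split_ifs
    · trivial
    · exact hS i hi
  · rw [glue_c]; trivial
  · rw [glue_b]; split_ifs <;> trivial
  · rw [glue_d]; exact h0

theorem trans_glue_b
    (h : ∀ S : WW s t → Prop, S (.inl (.inl 0)) → (∀ x, S x → S (glue p x)) → ∀ x, S x)
    (S : Fin (t + 1) → Prop) (h0 : S 0) (hS : ∀ x, S x → S (p.2 x)) (x : Fin (t + 1)) : S x := by
  refine h (fun w => Sum.elim (fun _ => True) (Sum.elim S (fun _ => True)) w) trivial ?_
    (.inr (.inl x))
  rintro ((i | ⟨⟩) | (i | ⟨⟩)) hi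
  · rw [glue_a]; split_ifs <;> trivial
  · rw [glue_c]; exact h0
  · rw [glue_b]; split_ifs
    · trivial
    · exact hS i hi
  · rw [glue_d]; trivial

theorem glue_surj {R : Type*} [CommRing R]
    (A : Fin (s + 1) → Fin (s + 1) → R) (B : Fin (t + 1) → Fin (t + 1) → R)
    (π : Equiv.Perm (WW s t)) (h : ∀ v, conn A B v (π v) ≠ 0) : ∃ p, glue p = π := by
  have ha : ∀ i, ∃ j, π (.inl (.inl i)) = rho s t (.inl (.inl j)) := by
    intro i
    have hi := h (.inl (.inl i))
    rcases hπ : π (.inl (.inl i)) with (j | ⟨⟩) | (j | ⟨⟩) <;> rw [hπ] at hi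
    · refine ⟨j, ?_⟩
      have : j ≠ 0 := by rintro rfl; simp [conn] at hi
      rw [rho_a, if_neg this]
    · exact ⟨0, by rw [rho_a, if_pos rfl]⟩
    · simp [conn] at hi
    · simp [conn] at hi
  have hb : ∀ i, ∃ j, π (.inr (.inl i)) = rho s t (.inr (.inl j)) := by
    intro i
    have hi := h (.inr (.inl i))
    rcases hπ : π (.inr (.inl i)) with (j | ⟨⟩) | (j | ⟨⟩) <;> rw [hπ] at hi
    · simp [conn] at hi
    · simp [conn] at hi
    · refine ⟨j, ?_⟩
      have : j ≠ 0 := by rintro rfl; simp [conn] at hi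
      rw [rho_b, if_neg this]
    · exact ⟨0, by rw [rho_b, if_pos rfl]⟩
  have hc : π (.inl (.inr ())) = .inr (.inl 0) := by
    have hi := h (.inl (.inr ()))
    rcases hπ : π (.inl (.inr ())) with (j | ⟨⟩) | (j | ⟨⟩) <;> rw [hπ] at hi <;>
      simp [conn] at hi
    rw [hi.1]
  have hd : π (.inr (.inr ())) = .inl (.inl 0) := by
    have hi := h (.inr (.inr ()))
    rcases hπ : π (.inr (.inr ())) with (j | ⟨⟩) | (j | ⟨⟩) <;> rw [hπ] at hi <;>
      simp [conn] at hi
    rw [hi.1]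
  choose f hf using ha
  choose g hg using hb
  have fi : Function.Injective f := fun i j hij => by
    have : π (.inl (.inl i)) = π (.inl (.inl j)) := by rw [hf, hf, hij]
    simpa using this
  have gi : Function.Injective g := fun i j hij => by
    have : π (.inr (.inl i)) = π (.inr (.inl j)) := by rw [hg, hg, hij]
    simpa using this
  refine ⟨(Equiv.ofBijective f (Finite.injective_iff_bijective.mp fi),
    Equiv.ofBijective g (Finite.injective_iff_bijective.mp gi)), ?_⟩
  apply Equiv.ext
  rintro ((i | ⟨⟩) | (i | ⟨⟩))
  · exact (hf i).symm
  · rw [glue_c, hc]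
  · exact (hg i).symm
  · rw [glue_d, hd]

theorem glue_prod {R : Type*} [CommRing R]
    (A : Fin (s + 1) → Fin (s + 1) → R) (B : Fin (t + 1) → Fin (t + 1) → R) :
    ∏ v, conn A B v (glue p v) = (∏ i, A i (p.1 i)) * ∏ i, B i (p.2 i) := by
  have ha : ∀ i, conn A B (.inl (.inl i)) (glue p (.inl (.inl i))) = A i (p.1 i) := by
    intro i
    rw [glue_a]
    split_ifs with h <;> simp [conn, h]
  have hb : ∀ i, conn A B (.inr (.inl i)) (glue p (.inr (.inl i))) = B i (p.2 i) := by
    intro i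
    rw [glue_b]
    split_ifs with h <;> simp [conn, h]
  have hc : conn A B (.inl (.inr ())) (glue p (.inl (.inr ()))) = 1 := by
    rw [glue_c]; simp [conn]
  have hd : conn A B (.inr (.inr ())) (glue p (.inr (.inr ()))) = 1 := by
    rw [glue_d]; simp [conn]
  simp only [Fintype.prod_sum_type, ha, hb]
  simp [hc, hd]

end

/-- The Hamiltonian cycle polynomial is multiplicative on the connection matrix. -/
theorem stmt8 {R : Type*} [CommRing R] (s t : ℕ) (hs : 1 ≤ s) (ht : 1 ≤ t)
    (A : Fin (s + 1) → Fin (s + 1) → R) (B : Fin (t + 1) → Fin (t + 1) → R) :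
    HCval (conn A B) = HCval A * HCval B := by
  have : Nontrivial (Fin (s + 1)) := Fin.nontrivial_iff_two_le.mpr (by omega)
  have : Nontrivial (Fin (t + 1)) := Fin.nontrivial_iff_two_le.mpr (by omega)
  have : Nontrivial (WW s t) := ⟨.inl (.inr ()), .inr (.inr ()), by simp⟩
  unfold HCval
  rw [Finset.sum_mul_sum, ← Finset.sum_product']
  symm
  refine Finset.sum_of_injOn glue glue_inj.injOn ?_ ?_ ?_
  · intro p hp
    simp only [Finset.coe_product, Set.mem_prod, Finset.mem_coe, Finset.mem_filter,
      Finset.mem_univ, true_and] at hp ⊢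
    rw [full_iff _ 0, full_iff _ 0] at hp
    rw [full_iff _ (.inl (.inl 0))]
    exact glue_trans p hp.1 hp.2
  · intro π hπ hn
    by_contra hprod
    obtain ⟨p, rfl⟩ := glue_surj A B π (fun v hv => hprod (Finset.prod_eq_zero (Finset.mem_univ v) hv))
    apply hn
    refine ⟨p, ?_, rfl⟩
    simp only [Finset.coe_product, Set.mem_prod, Finset.mem_coe, Finset.mem_filter,
      Finset.mem_univ, true_and] at hπ ⊢
    rw [full_iff _ (.inl (.inl 0))] at hπ
    rw [full_iff _ 0, full_iff _ 0]
    exact ⟨trans_glue_a p hπ, trans_glue_b p hπ⟩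
  · intro p _
    exact (glue_prod p A B).symm
end

section
/- Let R be a commutative ring and s, t : ℕ with s ≥ 1 and t ≥ 1, and let A : Fin (s+1) → Fin (s+1) → R and B : Fin (t+1) → Fin (t+1) → R be matrices. Then HC(con(A,B)) + HC^{(2)}(con(A,B)) = HC(A) * HC(B) + HC^{(2)}(A) * HC^{(2)}(B), where con(A,B) is the Hamiltonian connection matrix of A and B. -/
open scoped BigOperators

namespace ConnAux

open Equiv

lemma full_iff {V : Type*} [Fintype V] [DecidableEq V] [Nontrivial V] (π : Perm V) :
    (π.IsCycle ∧ π.support = Finset.univ) ↔ ∀ x y, π.SameCycle x y := by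
  constructor
  · rintro ⟨h, hs⟩ x y
    have hx : ∀ x, π x ≠ x := fun x => by
      rw [← Perm.mem_support, hs]; exact Finset.mem_univ x
    exact h.sameCycle (hx x) (hx y)
  · intro h
    have hx : ∀ x, π x ≠ x := by
      intro x hx
      obtain ⟨y, hy⟩ := exists_ne x
      exact hy ((h x y).eq_of_left hx).symm
    obtain ⟨x⟩ : Nonempty V := inferInstance
    refine ⟨⟨x, hx x, fun y _ => h x y⟩, ?_⟩
    ext y
    simp [hx y]

/-- Split the vertex `0`. -/
def split {s : ℕ} (α : Perm (Fin (s + 1))) : Perm (Fin (s + 1) ⊕ Unit) :=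
  swap (Sum.inl 0) (Sum.inr ()) * Perm.sumCongr α 1

/-- Glue two cycles. -/
def glue {s t : ℕ} (α : Perm (Fin (s + 1))) (β : Perm (Fin (t + 1))) :
    Perm ((Fin (s + 1) ⊕ Unit) ⊕ (Fin (t + 1) ⊕ Unit)) :=
  swap (Sum.inl (Sum.inl 0)) (Sum.inr (Sum.inl 0)) * Perm.sumCongr (split α) (split β)

lemma split_inl {s : ℕ} (α : Perm (Fin (s + 1))) (i) :
    split α (Sum.inl i) = if α i = 0 then Sum.inr () else Sum.inl (α i) := by
  simp [split, swap_apply_def]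

lemma split_inr {s : ℕ} (α : Perm (Fin (s + 1))) (i) :
    split α (Sum.inr i) = Sum.inl 0 := by
  simp [split, swap_apply_def]

variable {s t : ℕ} (α : Perm (Fin (s + 1))) (β : Perm (Fin (t + 1)))

lemma glue_ll (i) : glue α β (.inl (.inl i)) =
    if α i = 0 then .inl (.inr ()) else .inl (.inl (α i)) := by
  simp only [glue, Perm.mul_apply, Perm.sumCongr_apply, Sum.map_inl, split_inl]
  split_ifs with h <;> simp [swap_apply_def, h]

lemma glue_lr (i) : glue α β (.inl (.inr i)) = .inr (.inl 0) := by
  simp [glue, split_inr]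

lemma glue_rl (i) : glue α β (.inr (.inl i)) =
    if β i = 0 then .inr (.inr ()) else .inr (.inl (β i)) := by
  simp only [glue, Perm.mul_apply, Perm.sumCongr_apply, Sum.map_inr, split_inl]
  split_ifs with h <;> simp [swap_apply_def, h]

lemma glue_rr (i) : glue α β (.inr (.inr i)) = .inl (.inl 0) := by
  simp [glue, split_inr]

lemma sameCycle_ind {V : Type*} [Finite V] (π : Perm V) (x : V) (h : ∀ y, π.SameCycle x y)
    (P : V → Prop) (h0 : P x) (h1 : ∀ y, P y → P (π y)) (y : V) : P y := by
  obtain ⟨n, rfl⟩ := (h y).exists_nat_pow_eq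
  induction n with
  | zero => simpa
  | succ n ih => rw [pow_succ', Perm.mul_apply]; exact h1 _ ih

lemma glue_full (hα : ∀ x y, α.SameCycle x y) (hβ : ∀ x y, β.SameCycle x y) :
    ∀ x y, (glue α β).SameCycle x y := by
  have step : ∀ x y, (glue α β).SameCycle x y → (glue α β).SameCycle x (glue α β y) :=
    fun x y h => Perm.sameCycle_apply_right.2 h
  have h1 : ∀ i, (glue α β).SameCycle (.inl (.inl 0)) (.inl (.inl i)) := by
    refine sameCycle_ind α 0 (hα 0) _ (Perm.SameCycle.refl _ _) ?_
    intro i hi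
    by_cases h : α i = 0
    · rw [h]
    · have := step _ _ hi
      rwa [glue_ll, if_neg h] at this
  have h2 : ∀ i, (glue α β).SameCycle (.inl (.inl 0)) (.inl (.inr i)) := by
    intro i
    have := step _ _ (h1 (α.symm 0))
    rwa [glue_ll, if_pos (by simp)] at this
  have h3 : ∀ i, (glue α β).SameCycle (.inl (.inl 0)) (.inr (.inl i)) := by
    have h30 : (glue α β).SameCycle (.inl (.inl 0)) (.inr (.inl 0)) := by
      have := step _ _ (h2 ())
      rwa [glue_lr] at this
    refine sameCycle_ind β 0 (hβ 0) _ h30 ?_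
    intro i hi
    by_cases h : β i = 0
    · rw [h]; exact h30
    · have := step _ _ hi
      rwa [glue_rl, if_neg h] at this
  have h4 : ∀ i, (glue α β).SameCycle (.inl (.inl 0)) (.inr (.inr i)) := by
    intro i
    have := step _ _ (h3 (β.symm 0))
    rwa [glue_rl, if_pos (by simp)] at this
  have h : ∀ x, (glue α β).SameCycle (.inl (.inl 0)) x := by
    rintro ((i | i) | (i | i))
    exacts [h1 i, h2 i, h3 i, h4 i]
  exact fun x y => (h x).symm.trans (h y)

lemma full_left (h : ∀ x y, (glue α β).SameCycle x y) : ∀ x y, α.SameCycle x y := by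
  have key : ∀ w : (Fin (s + 1) ⊕ Unit) ⊕ (Fin (t + 1) ⊕ Unit), α.SameCycle 0 (Sum.elim (Sum.elim id (fun _ => 0)) (fun _ => 0) w) := by
    refine sameCycle_ind (glue α β) (.inl (.inl 0)) (h _) _ (Perm.SameCycle.refl _ _) ?_
    rintro ((i | i) | (i | i)) hi
    · have := Perm.sameCycle_apply_right.2 hi
      rw [glue_ll]
      split_ifs with h0
      · exact Perm.SameCycle.refl _ _
      · exact this
    · rw [glue_lr]; exact Perm.SameCycle.refl _ _
    · rw [glue_rl]; split_ifs <;> exact Perm.SameCycle.refl _ _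
    · rw [glue_rr]; exact Perm.SameCycle.refl _ _
  exact fun x y => (key (.inl (.inl x))).symm.trans (key (.inl (.inl y)))

lemma full_right (h : ∀ x y, (glue α β).SameCycle x y) : ∀ x y, β.SameCycle x y := by
  have key : ∀ w : (Fin (s + 1) ⊕ Unit) ⊕ (Fin (t + 1) ⊕ Unit), β.SameCycle 0 (Sum.elim (fun _ => 0) (Sum.elim id (fun _ => 0)) w) := by
    refine sameCycle_ind (glue α β) (.inr (.inl 0)) (h _) _ (Perm.SameCycle.refl _ _) ?_
    rintro ((i | i) | (i | i)) hi
    · rw [glue_ll]; split_ifs <;> exact Perm.SameCycle.refl _ _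
    · rw [glue_lr]; exact Perm.SameCycle.refl _ _
    · have := Perm.sameCycle_apply_right.2 hi
      rw [glue_rl]
      split_ifs with h0
      · exact Perm.SameCycle.refl _ _
      · exact this
    · rw [glue_rr]; exact Perm.SameCycle.refl _ _
  exact fun x y => (key (.inr (.inl x))).symm.trans (key (.inr (.inl y)))

lemma exists_split (γ : Perm (Fin (s + 1) ⊕ Unit)) (h : ∀ i, γ (.inl i) ≠ .inl 0) :
    ∃ α, γ = split α := by
  have hr : swap (Sum.inl 0) (Sum.inr ()) * γ ∈ (Perm.sumCongrHom (Fin (s + 1)) Unit).range := by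
    apply Perm.mem_sumCongrHom_range_of_perm_mapsTo_inl
    rintro _ ⟨i, rfl⟩
    rw [Perm.mul_apply]
    rcases hγ : γ (.inl i) with j | j
    · rw [swap_apply_of_ne_of_ne (by rw [← hγ]; exact h i) (by simp)]
      exact ⟨j, rfl⟩
    · exact ⟨0, by simp⟩
  obtain ⟨⟨α, c⟩, hc⟩ := hr
  refine ⟨α, ?_⟩
  have : c = 1 := Subsingleton.elim _ _
  subst this
  rw [split]
  change Perm.sumCongr α 1 = _ at hc
  rw [hc, ← mul_assoc, swap_mul_self, one_mul]

lemma exists_glue (π : Perm ((Fin (s + 1) ⊕ Unit) ⊕ (Fin (t + 1) ⊕ Unit)))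
    (h1 : ∀ i, ∃ x, x ≠ .inl 0 ∧ π (.inl (.inl i)) = .inl x)
    (h2 : ∀ i, π (.inl (.inr i)) = .inr (.inl 0))
    (h3 : ∀ i, ∃ x, x ≠ .inl 0 ∧ π (.inr (.inl i)) = .inr x) :
    ∃ α β, π = glue α β := by
  have hr : swap (Sum.inl (Sum.inl 0)) (Sum.inr (Sum.inl 0)) * π ∈
      (Perm.sumCongrHom (Fin (s + 1) ⊕ Unit) (Fin (t + 1) ⊕ Unit)).range := by
    apply Perm.mem_sumCongrHom_range_of_perm_mapsTo_inl
    rintro _ ⟨i | i, rfl⟩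
    · obtain ⟨x, hx, hπ⟩ := h1 i
      rw [Perm.mul_apply, hπ, swap_apply_of_ne_of_ne (by simpa using hx) (by simp)]
      exact ⟨x, rfl⟩
    · rw [Perm.mul_apply, h2, swap_apply_right]
      exact ⟨_, rfl⟩
  obtain ⟨⟨γ, δ⟩, hc⟩ := hr
  change Perm.sumCongr γ δ = _ at hc
  have hπ : π = swap (Sum.inl (Sum.inl 0)) (Sum.inr (Sum.inl 0)) * Perm.sumCongr γ δ := by
    rw [hc, ← mul_assoc, swap_mul_self, one_mul]
  obtain ⟨α, rfl⟩ := exists_split γ (by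
    intro i hi
    obtain ⟨x, hx, h⟩ := h1 i
    rw [hπ] at h
    simp [hi] at h)
  obtain ⟨β, rfl⟩ := exists_split δ (by
    intro i hi
    obtain ⟨x, hx, h⟩ := h3 i
    rw [hπ] at h
    simp [hi] at h)
  exact ⟨α, β, hπ⟩

lemma weight {R : Type*} [CommRing R]
    (A : Fin (s + 1) → Fin (s + 1) → R) (B : Fin (t + 1) → Fin (t + 1) → R) :
    ∏ v, conn A B v (glue α β v) = (∏ i, A i (α i)) * ∏ i, B i (β i) := by
  simp only [Fintype.prod_sum_type, Finset.univ_unique, Finset.prod_singleton, glue_lr, glue_rr]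
  have hA : ∀ i, conn A B (.inl (.inl i)) (glue α β (.inl (.inl i))) = A i (α i) := by
    intro i
    rw [glue_ll]
    split_ifs with h <;> simp [conn, h]
  have hB : ∀ i, conn A B (.inr (.inl i)) (glue α β (.inr (.inl i))) = B i (β i) := by
    intro i
    rw [glue_rl]
    split_ifs with h <;> simp [conn, h]
  simp only [hA, hB]
  simp [conn]

lemma weight_ne {R : Type*} [CommRing R]
    (A : Fin (s + 1) → Fin (s + 1) → R) (B : Fin (t + 1) → Fin (t + 1) → R)
    (π : Perm ((Fin (s + 1) ⊕ Unit) ⊕ (Fin (t + 1) ⊕ Unit)))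
    (h : ∏ v, conn A B v (π v) ≠ 0) : ∃ α β, π = glue α β := by
  have hv : ∀ v, conn A B v (π v) ≠ 0 := fun v hv =>
    h (Finset.prod_eq_zero (Finset.mem_univ v) hv)
  apply exists_glue
  · intro i
    have := hv (.inl (.inl i))
    rcases hπ : π (.inl (.inl i)) with (j | j) | (j | j) <;> rw [hπ] at this <;>
      simp [conn] at this ⊢
    exact this.1
  · intro i
    have := hv (.inl (.inr i))
    rcases hπ : π (.inl (.inr i)) with (j | j) | (j | j) <;> rw [hπ] at this <;>
      simp [conn] at this ⊢
    exact this.1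
  · intro i
    have := hv (.inr (.inl i))
    rcases hπ : π (.inr (.inl i)) with (j | j) | (j | j) <;> rw [hπ] at this <;>
      simp [conn] at this ⊢
    exact this.1

lemma glue_inj {α α' : Perm (Fin (s + 1))} {β β' : Perm (Fin (t + 1))}
    (h : glue α β = glue α' β') : α = α' ∧ β = β' := by
  have h1 := mul_left_cancel h
  have h2 := @Perm.sumCongrHom_injective _ _ (split α, split β) (split α', split β') h1
  simp only [Prod.mk.injEq] at h2
  have h3 := @Perm.sumCongrHom_injective _ _ (α, 1) (α', 1) (mul_left_cancel h2.1)
  have h4 := @Perm.sumCongrHom_injective _ _ (β, 1) (β', 1) (mul_left_cancel h2.2)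
  simp only [Prod.mk.injEq] at h3 h4
  exact ⟨h3.1, h4.1⟩

lemma HC_conn {R : Type*} [CommRing R] (hs : 1 ≤ s) (ht : 1 ≤ t)
    (A : Fin (s + 1) → Fin (s + 1) → R) (B : Fin (t + 1) → Fin (t + 1) → R) :
    HCval (conn A B) = HCval A * HCval B := by
  classical
  have : Nontrivial (Fin (s + 1)) := Fin.nontrivial_iff_two_le.2 (by omega)
  have : Nontrivial (Fin (t + 1)) := Fin.nontrivial_iff_two_le.2 (by omega)
  have : Nontrivial ((Fin (s + 1) ⊕ Unit) ⊕ (Fin (t + 1) ⊕ Unit)) :=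
    ⟨.inl (.inl 0), .inr (.inl 0), by simp⟩
  unfold HCval
  rw [Finset.sum_mul_sum, ← Finset.sum_product']
  symm
  apply Finset.sum_of_injOn (fun p => glue p.1 p.2)
  · rintro ⟨α, β⟩ _ ⟨α', β'⟩ _ h
    obtain ⟨rfl, rfl⟩ := glue_inj h
    rfl
  · rintro ⟨α, β⟩ h
    simp only [Finset.coe_product, Set.mem_prod, Finset.mem_coe, Finset.mem_filter,
      Finset.mem_univ, true_and, full_iff] at h ⊢
    exact glue_full α β h.1 h.2
  · intro π hπ hn
    by_contra hw
    obtain ⟨α, β, rfl⟩ := weight_ne A B π hw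
    apply hn
    refine ⟨(α, β), ?_, rfl⟩
    simp only [Finset.coe_product, Set.mem_prod, Finset.mem_coe, Finset.mem_filter,
      Finset.mem_univ, true_and, full_iff] at hπ ⊢
    exact ⟨full_left α β hπ, full_right α β hπ⟩
  · rintro ⟨α, β⟩ _
    exact (weight α β A B).symm

lemma HC2_eq {V R : Type*} [Fintype V] [CommRing R] (A : V → V → R) :
    HC2val A = HCval (fun i j => A i j ^ 2) := rfl

lemma conn_sq {R : Type*} [CommRing R]
    (A : Fin (s + 1) → Fin (s + 1) → R) (B : Fin (t + 1) → Fin (t + 1) → R) :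
    (fun i j => conn A B i j ^ 2) = conn (fun i j => A i j ^ 2) (fun i j => B i j ^ 2) := by
  funext x y
  rcases x with (i | i) | (i | i) <;> rcases y with (j | j) | (j | j) <;>
    simp [conn]

end ConnAux

/-- `Q` evaluated at the connection matrix decomposes as a product:
`HC(con(A,B)) + HC²(con(A,B)) = HC(A)·HC(B) + HC²(A)·HC²(B)`. -/
theorem stmt9 {R : Type*} [CommRing R] (s t : ℕ) (hs : 1 ≤ s) (ht : 1 ≤ t)
    (A : Fin (s + 1) → Fin (s + 1) → R) (B : Fin (t + 1) → Fin (t + 1) → R) :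
    HCval (conn A B) + HC2val (conn A B) = HCval A * HCval B + HC2val A * HC2val B := by
  simp only [ConnAux.HC2_eq]
  rw [ConnAux.conn_sq, ConnAux.HC_conn hs ht, ConnAux.HC_conn hs ht]
end

section
/- Let R be a commutative ring, s : ℕ with s ≥ 1, a : Fin s → R and b ∈ R, and let M be the gadget matrix associated with a and b. Then HC(M) = b * (Σ_{i : Fin s} a i). -/
open scoped BigOperators

/-- The gadget matrix: `M 0 0 = 0`, `M 0 (succ j) = b`, `M (succ i) 0 = a i`, and
`M (succ i) (succ j) = 1` iff `j` is the cyclic predecessor of `i` in `Fin s`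
(i.e. `(j + 1) % s = i`), and `0` otherwise. -/
def gadget {R : Type*} [CommRing R] {s : ℕ} (a : Fin s → R) (b : R) :
    Fin (s + 1) → Fin (s + 1) → R := fun i j =>
  Fin.cases
    (Fin.cases 0 (fun _ => b) j)
    (fun i' => Fin.cases (a i')
      (fun j' => if (j'.val + 1) % s = i'.val then 1 else 0) j)
    i

/-- The full cycle leaving the gadget at `i.succ`. -/
def gadgetCycle {t : ℕ} (i : Fin (t + 1)) : Equiv.Perm (Fin (t + 1 + 1)) :=
  Equiv.Perm.decomposeFin.symm (0, Equiv.subRight 1) * Equiv.swap 0 i.succ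

theorem gadgetCycle_zero {t : ℕ} (i : Fin (t + 1)) : gadgetCycle i 0 = (i - 1).succ := by
  simp [gadgetCycle]

theorem gadgetCycle_self {t : ℕ} (i : Fin (t + 1)) : gadgetCycle i i.succ = 0 := by
  simp [gadgetCycle]

theorem gadgetCycle_ne {t : ℕ} (i j : Fin (t + 1)) (h : j ≠ i) :
    gadgetCycle i j.succ = (j - 1).succ := by
  have h2 : Equiv.swap 0 i.succ j.succ = j.succ :=
    Equiv.swap_apply_of_ne_of_ne (Fin.succ_ne_zero _) (fun e => h (Fin.succ_injective _ e))
  simp [gadgetCycle, h2]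

open Fin.CommRing in
theorem gadgetCycle_same {t : ℕ} (i x : Fin (t + 1)) : 
    (gadgetCycle i).SameCycle 0 x.succ := by
  have key : ∀ k : ℕ, (gadgetCycle i).SameCycle 0 (i - 1 - (k : Fin (t + 1))).succ := by
    intro k
    induction k with
    | zero =>
      have := (Equiv.Perm.SameCycle.refl (gadgetCycle i) 0).apply_right
      simpa [gadgetCycle_zero] using this
    | succ k ih =>
      have e : i - 1 - ((k + 1 : ℕ) : Fin (t + 1)) = (i - 1 - (k : Fin (t + 1))) - 1 := by
        push_cast; abel
      rw [e]
      generalize i - 1 - (k : Fin (t + 1)) = j at ih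
      by_cases h : j = i
      · subst h
        have := (Equiv.Perm.SameCycle.refl (gadgetCycle j) 0).apply_right
        simpa [gadgetCycle_zero] using this
      · have := ih.apply_right
        rwa [gadgetCycle_ne _ _ h] at this
  have := key (i - 1 - x).val
  rw [Fin.cast_val_eq_self] at this
  simpa using this

theorem gadget_pred {t : ℕ} (i j : Fin (t + 1)) :
    (j.val + 1) % (t + 1) = i.val ↔ j = i - 1 := by
  rw [eq_sub_iff_add_eq, Fin.ext_iff, Fin.val_add]
  simp [Nat.add_mod]

/-- The Hamiltonian cycle polynomial of the gadget matrix is `b * Σ_i a i`. -/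
theorem stmt10 {R : Type*} [CommRing R] (s : ℕ) (hs : 1 ≤ s) (a : Fin s → R) (b : R) :
    HCval (gadget a b) = b * ∑ i : Fin s, a i := by
  obtain ⟨t, rfl⟩ : ∃ t, s = t + 1 := ⟨s - 1, by omega⟩
  have g0 : gadget a b 0 0 = 0 := rfl
  have g1 : ∀ j : Fin (t + 1), gadget a b 0 j.succ = b := fun _ => rfl
  have g2 : ∀ j : Fin (t + 1), gadget a b j.succ 0 = a j := fun _ => rfl
  have g3 : ∀ i j : Fin (t + 1), gadget a b i.succ j.succ = if j = i - 1 then 1 else 0 := by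
    intro i j
    simp only [← gadget_pred]
    rfl
  rw [HCval, Finset.mul_sum]
  symm
  refine Finset.sum_of_injOn gadgetCycle ?_ ?_ ?_ ?_
  · intro i _ j _ h
    by_contra hne
    have h1 := gadgetCycle_ne j i hne
    rw [← h, gadgetCycle_self] at h1
    exact Fin.succ_ne_zero _ h1.symm
  · intro i _
    have hz : gadgetCycle i 0 ≠ 0 := by
      rw [gadgetCycle_zero]; exact Fin.succ_ne_zero _
    have hsame : ∀ y, (gadgetCycle i).SameCycle 0 y := by
      intro y
      refine Fin.cases (Equiv.Perm.SameCycle.refl _ _) (gadgetCycle_same i) y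
    simp only [Finset.coe_filter, Finset.mem_univ, true_and, Set.mem_setOf_eq]
    refine ⟨⟨0, hz, fun y _ => hsame y⟩, ?_⟩
    ext y
    simp only [Equiv.Perm.mem_support, Finset.mem_univ, iff_true]
    exact fun h => hz ((hsame y).apply_eq_self_iff.2 h)
  · intro π _ hn
    by_contra hp
    apply hn
    have hf : ∀ v, gadget a b v (π v) ≠ 0 := fun v hv =>
      hp (Finset.prod_eq_zero (Finset.mem_univ v) hv)
    have h0 : π.symm 0 ≠ 0 := by
      intro h
      apply hf 0
      rw [Equiv.symm_apply_eq] at h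
      rw [← h, g0]
    obtain ⟨i, hi⟩ := Fin.exists_succ_eq.2 h0
    have hi' : π i.succ = 0 := by rw [hi]; simp
    refine ⟨i, by simp, ?_⟩
    have hs : ∀ x, x ≠ 0 → gadgetCycle i x = π x := by
      intro x hx
      obtain ⟨j, rfl⟩ := Fin.exists_succ_eq.2 hx
      by_cases h : j = i
      · subst h; rw [gadgetCycle_self, hi']
      · rw [gadgetCycle_ne _ _ h]
        have hj : π j.succ ≠ 0 := by
          intro e
          exact h (Fin.succ_injective _ (π.injective (e.trans hi'.symm)))
        obtain ⟨l, hl⟩ := Fin.exists_succ_eq.2 hj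
        have := hf j.succ
        rw [← hl, g3] at this
        rw [← hl]
        by_contra hc
        apply this
        rw [if_neg]
        rintro rfl
        exact hc rfl
    have hs0 : gadgetCycle i 0 = π 0 := by
      obtain ⟨x, hx⟩ := (gadgetCycle i).surjective (π 0)
      by_cases h : x = 0
      · rw [← hx, h]
      · rw [hs x h] at hx
        exact absurd (π.injective hx) h
    ext1 x
    by_cases h : x = 0
    · rw [h, hs0]
    · exact hs x h
  · intro i _
    rw [Fin.prod_univ_succ, gadgetCycle_zero, g1, Finset.prod_eq_single i, gadgetCycle_self, g2]
    · intro j _ h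
      rw [gadgetCycle_ne _ _ h, g3, if_pos rfl]
    · simp
end

section
/- Let R be a commutative ring, s : ℕ with s ≥ 1, a : Fin s → R and b ∈ R, and let M be the gadget matrix associated with a and b. Then HC^{(2)}(M) = b^2 * (Σ_{i : Fin s} (a i)^2). In particular, if Σ_{i} (a i)^2 = 0 then HC^{(2)}(M) = 0. -/
open scoped BigOperators

/-- The full cycle sending `0` to `i - 1`, `i` to `0`, and every other `j` to `j - 1`. -/
def gcyc {n : ℕ} (i : Fin (n + 1)) : Equiv.Perm (Fin (n + 1 + 1)) :=
  Equiv.Perm.decomposeFin.symm ((i - 1).succ, Equiv.subRight 1)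

theorem gcyc_zero {n : ℕ} (i : Fin (n + 1)) : gcyc i 0 = (i - 1).succ := by
  simp only [gcyc, Equiv.Perm.decomposeFin_symm_apply_zero]

theorem gcyc_self {n : ℕ} (i : Fin (n + 1)) : gcyc i i.succ = 0 := by
  simp only [gcyc, Equiv.Perm.decomposeFin_symm_apply_succ, Equiv.subRight_apply,
    Equiv.swap_apply_right]

theorem gcyc_ne {n : ℕ} (i j : Fin (n + 1)) (h : j ≠ i) : gcyc i j.succ = (j - 1).succ := by
  simp only [gcyc, Equiv.Perm.decomposeFin_symm_apply_succ, Equiv.subRight_apply]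
  apply Equiv.swap_apply_of_ne_of_ne (Fin.succ_ne_zero _)
  intro h'
  exact h (sub_left_injective (Fin.succ_injective _ h'))

open Fin.CommRing in
theorem gcyc_sameCycle_aux {n : ℕ} (i : Fin (n + 1)) (k : ℕ) :
    (gcyc i).SameCycle 0 (i - 1 - (k : Fin (n + 1))).succ := by
  induction k with
  | zero =>
    refine ⟨1, ?_⟩
    simp [gcyc_zero]
  | succ k ih =>
    by_cases h : i - 1 - (k : Fin (n + 1)) = i
    · refine ⟨1, ?_⟩
      have : i - 1 - ((k + 1 : ℕ) : Fin (n + 1)) = i - 1 := by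
        push_cast
        rw [← sub_sub, h]
      rw [this]
      simp [gcyc_zero]
    · have h2 := Equiv.Perm.sameCycle_apply_right.mpr ih
      rw [gcyc_ne i _ h] at h2
      push_cast
      rwa [← sub_sub]

open Fin.CommRing in
theorem gcyc_sameCycle {n : ℕ} (i : Fin (n + 1)) (v : Fin (n + 1 + 1)) :
    (gcyc i).SameCycle 0 v := by
  induction v using Fin.cases with
  | zero => exact Equiv.Perm.SameCycle.refl _ _
  | succ j =>
    have h := gcyc_sameCycle_aux i (i - 1 - j).val
    rw [Fin.cast_val_eq_self, sub_sub_cancel] at h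
    exact h

theorem gcyc_moves {n : ℕ} (i : Fin (n + 1)) (v : Fin (n + 1 + 1)) : gcyc i v ≠ v := by
  intro h
  have h0 := (gcyc_sameCycle i v).apply_eq_self_iff.mpr h
  rw [gcyc_zero] at h0
  exact Fin.succ_ne_zero _ h0

theorem pred_of_mod {n : ℕ} (i j : Fin (n + 1)) : (j.val + 1) % (n + 1) = i.val ↔ j = i - 1 := by
  rw [eq_sub_iff_add_eq, Fin.ext_iff, Fin.val_add, Fin.val_one', Nat.add_mod_mod]

theorem gadget_prod {R : Type*} [CommRing R] {n : ℕ} (a : Fin (n + 1) → R) (b : R)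
    (i : Fin (n + 1)) :
    ∏ v, (gadget a b v (gcyc i v)) ^ 2 = b ^ 2 * (a i) ^ 2 := by
  rw [Fin.prod_univ_succ, gcyc_zero, Finset.prod_eq_single i]
  · rw [gcyc_self]
    simp [gadget]
  · intro j _ h
    rw [gcyc_ne i j h]
    simp [gadget, pred_of_mod]
  · simp

theorem eq_gcyc {R : Type*} [CommRing R] {n : ℕ} (a : Fin (n + 1) → R) (b : R)
    (π : Equiv.Perm (Fin (n + 1 + 1))) (h0 : π 0 ≠ 0)
    (h : ∀ v, gadget a b v (π v) ≠ 0) : ∃ i, gcyc i = π := by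
  obtain ⟨x, hx⟩ := π.surjective 0
  obtain ⟨i, rfl⟩ := Fin.exists_succ_eq.mpr (show x ≠ 0 by rintro rfl; exact h0 hx)
  refine ⟨i, ?_⟩
  have key : ∀ j : Fin (n + 1), gcyc i j.succ = π j.succ := by
    intro j
    by_cases hj : j = i
    · rw [hj, gcyc_self, hx]
    · rw [gcyc_ne i j hj]
      have hne : π j.succ ≠ 0 := by
        rw [← hx]
        intro h'
        exact hj (Fin.succ_injective _ (π.injective h'))
      obtain ⟨k, hk⟩ := Fin.exists_succ_eq.mpr hne
      have := h j.succ
      rw [← hk] at this ⊢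
      simp only [gadget, Fin.cases_succ, pred_of_mod] at this
      by_cases hkj : k = j - 1
      · rw [hkj]
      · simp [hkj] at this
  ext1 v
  induction v using Fin.cases with
  | succ j => exact key j
  | zero =>
    obtain ⟨w, hw⟩ := π.surjective (gcyc i 0)
    induction w using Fin.cases with
    | zero => exact hw.symm
    | succ j =>
      rw [← key j] at hw
      exact absurd ((gcyc i).injective hw) (Fin.succ_ne_zero _)

/-- `HC^{(2)}` of the gadget matrix is `b² * Σ_i (a i)²`; in particular it vanishes
when `Σ_i (a i)² = 0`. -/
theorem stmt11 {R : Type*} [CommRing R] (s : ℕ) (hs : 1 ≤ s) (a : Fin s → R) (b : R) :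
    HC2val (gadget a b) = b ^ 2 * ∑ i : Fin s, (a i) ^ 2 ∧
      ((∑ i : Fin s, (a i) ^ 2) = 0 → HC2val (gadget a b) = 0) := by
  have main : HC2val (gadget a b) = b ^ 2 * ∑ i : Fin s, (a i) ^ 2 := by
    obtain ⟨n, rfl⟩ : ∃ n, s = n + 1 := ⟨s - 1, by omega⟩
    rw [Finset.mul_sum, HC2val]
    symm
    apply Finset.sum_of_injOn gcyc
    · intro i _ j _ hij
      have h := congrArg (fun π => π 0) hij
      simp only [gcyc_zero] at h
      exact sub_left_injective (Fin.succ_injective _ h)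
    · intro i _
      simp only [Finset.coe_filter, Finset.mem_univ, true_and, Set.mem_ofPred_eq]
      refine ⟨⟨0, gcyc_moves i 0, fun y _ => gcyc_sameCycle i y⟩, ?_⟩
      ext v
      simp [Equiv.Perm.mem_support, gcyc_moves]
    · intro π hπ hn
      by_contra hne
      apply hn
      simp only [Finset.mem_filter, Finset.mem_univ, true_and] at hπ
      have h0 : π 0 ≠ 0 := by
        have hm := Finset.mem_univ (0 : Fin (n + 1 + 1))
        rw [← hπ.2] at hm
        exact (@Equiv.Perm.mem_support _ (_) _ _ _).mp hm
      obtain ⟨i, hi⟩ := eq_gcyc a b π h0 (fun v hv => hne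
        (Finset.prod_eq_zero (Finset.mem_univ v) (by rw [hv]; ring)))
      exact ⟨i, by simp, hi⟩
    · intro i _
      exact (gadget_prod a b i).symm
  exact ⟨main, fun h => by rw [main, h, mul_zero]⟩
end

section
/- Let F be a field, s : ℕ with s ≥ 1, and a : Fin s → F with Σ_{i} a i ≠ 0 and Σ_{i} (a i)^2 = 0. Then for every t ≥ 2, setting N := s + t + 3, there exists a projection substitution θ : (Fin N × Fin N) → MvPolynomial (Fin t × Fin t) F such that MvPolynomial.aeval θ Q_N = HC_t. In other words, HC_t is a projection of Q_N. -/
open scoped BigOperators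

/-- A permutation with a single orbit. -/
def Cyc {V : Type} (π : Equiv.Perm V) : Prop :=
  ∀ p : V → Prop, (∀ x, p (π x) ↔ p x) → ∀ x y, p x → p y

open Classical in
/-- Hamiltonian cycle sum of a matrix over an arbitrary finite type. -/
noncomputable def hc {V : Type} [Fintype V] [DecidableEq V] {R : Type*} [CommRing R] (M : V → V → R) : R :=
  ∑ π : Equiv.Perm V, if Cyc π then ∏ i, M i (π i) else 0

theorem cyc_option_none {V : Type} [DecidableEq V] [Nonempty V] (σ : Equiv.Perm V) :
    ¬ Cyc (Equiv.Perm.decomposeOption.symm (none, σ)) := by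
  intro h
  obtain ⟨v⟩ := ‹Nonempty V›
  have := h (fun x => x = none) (by
    intro x
    cases x <;> simp [Equiv.Perm.decomposeOption]) none (some v) rfl
  simp at this

theorem dec_none {V : Type} [DecidableEq V] (w : V) (σ : Equiv.Perm V) :
    Equiv.Perm.decomposeOption.symm (some w, σ) none = some w := by
  simp [Equiv.Perm.decomposeOption]

theorem dec_some {V : Type} [DecidableEq V] (w : V) (σ : Equiv.Perm V) (x : V) :
    Equiv.Perm.decomposeOption.symm (some w, σ) (some x)
      = if σ x = w then none else some (σ x) := by
  simp [Equiv.Perm.decomposeOption, Equiv.swap_apply_def]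

theorem cyc_option_some {V : Type} [DecidableEq V] (w : V) (σ : Equiv.Perm V) :
    Cyc (Equiv.Perm.decomposeOption.symm (some w, σ)) ↔ Cyc σ := by
  constructor
  · intro h p hp x y hx
    refine h (fun o => p (o.getD w)) ?_ (some x) (some y) hx
    intro o
    cases o with
    | none => rw [dec_none]; simp
    | some z =>
      rw [dec_some]
      have := hp z
      split_ifs with hz
      · rw [hz] at this; simpa using this
      · simpa using this
  · intro h q hq
    have hn : q (some w) ↔ q none := by
      have := hq none
      rwa [dec_none] at this
    have hs : ∀ x y, q (some x) → q (some y) := by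
      refine h (fun x => q (some x)) ?_
      intro x
      have := hq (some x)
      rw [dec_some] at this
      split_ifs at this with hz
      · rw [hz, hn]; exact this
      · exact this
    intro x y hx
    cases x <;> cases y
    · exact hx
    · exact hs w _ (hn.2 hx)
    · exact hn.1 (hs _ _ hx)
    · exact hs _ _ hx

/-- Row expansion. -/
theorem hc_option {V : Type} [Fintype V] [DecidableEq V] [Nonempty V] {R : Type*} [CommRing R]
    (M : Option V → Option V → R) :
    hc M = ∑ w : V, M none (some w) *
      hc (fun i j => if j = w then M (some i) none else M (some i) (some j)) := by
  classical
  unfold hc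
  rw [← Equiv.sum_comp Equiv.Perm.decomposeOption.symm, Fintype.sum_prod_type,
    Fintype.sum_option]
  simp only [cyc_option_none, if_false, Finset.sum_const_zero, zero_add]
  refine Finset.sum_congr rfl fun w _ => ?_
  rw [Finset.mul_sum]
  refine Finset.sum_congr rfl fun σ _ => ?_
  simp only [cyc_option_some]
  split_ifs with h
  · rw [Fintype.prod_option, dec_none]
    congr 1
    refine Finset.prod_congr rfl fun x _ => ?_
    rw [dec_some]
    split_ifs <;> rfl
  · simp

theorem hc_col_zero {V : Type} [Fintype V] [DecidableEq V] {R : Type*} [CommRing R]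
    (M : V → V → R) (p : V) (h : ∀ i, M i p = 0) : hc M = 0 := by
  unfold hc
  refine Finset.sum_eq_zero fun π _ => ?_
  split_ifs
  · refine Finset.prod_eq_zero (Finset.mem_univ (π.symm p)) ?_
    simp [h]
  · rfl

theorem hc_reindex {V W : Type} [Fintype V] [Fintype W] [DecidableEq V] [DecidableEq W] {R : Type*} [CommRing R]
    (e : V ≃ W) (M : W → W → R) : hc (fun i j => M (e i) (e j)) = hc M := by
  unfold hc
  rw [← Equiv.sum_comp (e.permCongr)]
  refine Finset.sum_congr rfl fun π _ => ?_
  have hcyc : Cyc (e.permCongr π) ↔ Cyc π := by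
    constructor
    · intro h p hp x y hx
      have := h (fun z => p (e.symm z)) (by intro z; simpa using hp (e.symm z)) (e x) (e y)
      simp only [Equiv.symm_apply_apply] at this
      exact this hx
    · intro h p hp x y hx
      have := h (fun z => p (e z)) (by intro z; simpa using hp (e z)) (e.symm x) (e.symm y)
      simp only [Equiv.apply_symm_apply] at this
      exact this hx
  by_cases h : Cyc π
  · rw [if_pos h, if_pos (hcyc.2 h), ← Equiv.prod_comp e]
    simp
  · rw [if_neg h, if_neg (fun h' => h (hcyc.1 h'))]

/-- The matrix in which `n` takes over the column of `p`, and `p` is entered only from `n`. -/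
def Dm {V : Type} [DecidableEq V] {R : Type*} [CommRing R] (n p : V) (M : V → V → R) :
    V → V → R :=
  fun i j => if j = n then M i p else if j = p then (if i = n then 1 else 0) else M i j

/-- Insert a new vertex before `p`. -/
def ext {V : Type} [DecidableEq V] {R : Type*} [CommRing R] (n p : V) (b : R) (M : V → V → R) :
    Option V → Option V → R
  | none, none => 0
  | none, some j => if j = p then 1 else if j = n then b else 0
  | some i, none => M i p
  | some i, some j => if j = p then (if i = n then 1 else 0) else M i j

theorem hc_ext {V : Type} [Fintype V] [DecidableEq V] {R : Type*} [CommRing R] (n p : V)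
    (hnp : n ≠ p) (b : R) (M : V → V → R) :
    hc (ext n p b M) = hc M + b * hc (Dm n p M) := by
  have : Nonempty V := ⟨n⟩
  rw [hc_option, Fintype.sum_eq_add p n hnp.symm]
  · congr 1
    · simp only [ext, if_true, one_mul]
      congr 1
      funext i j
      split_ifs with h
      · rw [h]
      · rfl
    · simp only [ext, if_true, if_neg hnp]
      rfl
  · rintro x ⟨h1, h2⟩
    simp [ext, h1, h2]

theorem hc_Dm_ext {V : Type} [Fintype V] [DecidableEq V] {R : Type*} [CommRing R] (n p : V)
    (hnp : n ≠ p) (b : R) (M : V → V → R) :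
    hc (Dm (some n) (some p) (ext n p b M)) = hc (Dm n p M) := by
  have : Nonempty V := ⟨n⟩
  rw [hc_option, Fintype.sum_eq_single n]
  · simp only [Dm, ext, if_true, one_mul]
    congr 1
    funext i j
    by_cases h : j = n
    · simp [h, Dm]
    · by_cases h' : j = p
      · simp [h', hnp.symm, Dm]
      · simp [h, h', Dm]
  · intro x h
    by_cases h' : x = p
    · simp [Dm, ext, h', hnp.symm]
    · simp [Dm, ext, h, h']

/-- Subdivide the entry to `p` with weight `c`. -/
def pad {V : Type} [DecidableEq V] {R : Type*} [CommRing R] (p : V) (c : R) (M : V → V → R) :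
    Option V → Option V → R
  | none, none => 0
  | none, some j => if j = p then c else 0
  | some i, none => M i p
  | some i, some j => if j = p then 0 else M i j

theorem hc_pad {V : Type} [Fintype V] [DecidableEq V] {R : Type*} [CommRing R] (p : V)
    (c : R) (M : V → V → R) : hc (pad p c M) = c * hc M := by
  have : Nonempty V := ⟨p⟩
  rw [hc_option, Fintype.sum_eq_single p]
  · simp only [pad, if_true]
    congr 2
    funext i j
    split_ifs with h
    · rw [h]
    · rfl
  · intro x h
    simp [pad, h]

/-- The starting matrix. -/
def base {V : Type} [DecidableEq V] {R : Type*} [CommRing R] (p : V) (M : V → V → R) :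
    Option V → Option V → R
  | none, none => 0
  | none, some j => if j = p then 1 else 0
  | some _, none => 0
  | some i, some j => M i j

theorem hc_base {V : Type} [Fintype V] [DecidableEq V] {R : Type*} [CommRing R] (p : V)
    (M : V → V → R) : hc (base p M) = 0 := by
  have : Nonempty V := ⟨p⟩
  rw [hc_option, Fintype.sum_eq_single p]
  · rw [hc_col_zero _ p (by intro i; simp [base]), mul_zero]
  · intro x h
    simp [base, h]

theorem hc_Dm_base {V : Type} [Fintype V] [DecidableEq V] {R : Type*} [CommRing R] (p : V)
    (M : V → V → R) : hc (Dm none (some p) (base p M)) = hc M := by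
  have : Nonempty V := ⟨p⟩
  rw [hc_option, Fintype.sum_eq_single p]
  · simp only [Dm, base, if_true, reduceCtorEq, if_false, one_mul]
    congr 1
    funext i j
    by_cases h : j = p <;> simp [h]
  · intro x h
    simp [Dm, base, h]

/-- Entrywise square. -/
def sqm {V : Type} {R : Type*} [CommRing R] (M : V → V → R) : V → V → R := fun i j => M i j ^ 2

theorem sqm_ext {V : Type} [DecidableEq V] {R : Type*} [CommRing R] (n p : V) (b : R)
    (M : V → V → R) : sqm (ext n p b M) = ext n p (b ^ 2) (sqm M) := by
  funext i j
  cases i <;> cases j <;> simp only [sqm, ext] <;> (try split_ifs) <;> simp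

theorem sqm_pad {V : Type} [DecidableEq V] {R : Type*} [CommRing R] (p : V) (b : R)
    (M : V → V → R) : sqm (pad p b M) = pad p (b ^ 2) (sqm M) := by
  funext i j
  cases i <;> cases j <;> simp only [sqm, pad] <;> (try split_ifs) <;> simp

theorem sqm_base {V : Type} [DecidableEq V] {R : Type*} [CommRing R] (p : V)
    (M : V → V → R) : sqm (base p M) = base p (sqm M) := by
  funext i j
  cases i <;> cases j <;> simp only [sqm, base] <;> (try split_ifs) <;> simp

/-- Entries are variables or constants. -/
def IsP {τ F : Type*} [CommSemiring F] (f : MvPolynomial τ F) : Prop :=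
  (∃ k : τ, f = MvPolynomial.X k) ∨ (∃ c : F, f = MvPolynomial.C c)

theorem isP_C {τ F : Type*} [CommSemiring F] (c : F) :
    IsP (MvPolynomial.C c : MvPolynomial τ F) := Or.inr ⟨c, rfl⟩

theorem isP_zero {τ F : Type*} [CommSemiring F] :
    IsP (0 : MvPolynomial τ F) := Or.inr ⟨0, by simp⟩

theorem isP_one {τ F : Type*} [CommSemiring F] :
    IsP (1 : MvPolynomial τ F) := Or.inr ⟨1, by simp⟩

theorem gadget_s12 {τ F : Type*} [Field F] {U : Type} [Fintype U] [DecidableEq U] (u : U)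
    (X : U → U → MvPolynomial τ F) (hX : ∀ i j, IsP (X i j)) (s : ℕ) :
    ∀ a : Fin s → F, ∃ (V : Type) (_ : Fintype V) (_ : DecidableEq V) (n p : V)
      (M : V → V → MvPolynomial τ F),
      n ≠ p ∧ Fintype.card V = Fintype.card U + 1 + s ∧ (∀ i j, IsP (M i j)) ∧
      hc M = MvPolynomial.C (∑ i, a i) * hc X ∧ hc (Dm n p M) = hc X ∧
      hc (sqm M) = MvPolynomial.C (∑ i, a i ^ 2) * hc (sqm X) ∧
      hc (Dm n p (sqm M)) = hc (sqm X) := by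
  induction s with
  | zero =>
    intro a
    refine ⟨Option U, inferInstance, inferInstance, none, some u, base u X, by simp, by simp,
      ?_, ?_, ?_, ?_, ?_⟩
    · intro i j
      cases i <;> cases j <;> simp only [base] <;> (try split_ifs) <;>
        first | exact isP_zero | exact isP_one | exact hX _ _
    · simp [hc_base]
    · exact hc_Dm_base _ _
    · simp [sqm_base, hc_base]
    · rw [sqm_base]; exact hc_Dm_base _ _
  | succ s ih =>
    intro a
    obtain ⟨V, _, _, n, p, M, hnp, hcard, hP, h1, h2, h3, h4⟩ := ih (fun i => a i.succ)
    refine ⟨Option V, inferInstance, inferInstance, some n, some p,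
      ext n p (MvPolynomial.C (a 0)) M, by simpa using hnp, by simp [hcard]; ring,
      ?_, ?_, ?_, ?_, ?_⟩
    · intro i j
      cases i <;> cases j <;> simp only [ext] <;> (try split_ifs) <;>
        first | exact isP_zero | exact isP_one | exact hP _ _ | exact isP_C _
    · rw [hc_ext _ _ hnp, h1, h2, Fin.sum_univ_succ, map_add]; ring
    · rw [hc_Dm_ext _ _ hnp, h2]
    · rw [sqm_ext, hc_ext _ _ hnp, h3, h4, Fin.sum_univ_succ, map_add, map_pow]; ring
    · rw [sqm_ext, hc_Dm_ext _ _ hnp, h4]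

theorem cyc_iff {n : ℕ} (hn : 2 ≤ n) (π : Equiv.Perm (Fin n)) :
    (π.IsCycle ∧ π.support = Finset.univ) ↔ Cyc π := by
  have : Nontrivial (Fin n) := Fin.nontrivial_iff_two_le.2 hn
  constructor
  · rintro ⟨h, hs⟩ p hp x y hx
    have hm : ∀ z, π z ≠ z := fun z => Equiv.Perm.mem_support.1 (hs ▸ Finset.mem_univ z)
    obtain ⟨k, hk⟩ := (h.exists_pow_eq (hm x) (hm y))
    have : ∀ k : ℕ, p ((π ^ k) x) := by
      intro k
      induction k with
      | zero => simpa using hx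
      | succ k ih => rw [pow_succ', Equiv.Perm.mul_apply, hp]; exact ih
    exact hk ▸ this k
  · intro h
    have hsc : ∀ x y, π.SameCycle x y := fun x y =>
      h (fun z => π.SameCycle x z) (fun z => Equiv.Perm.sameCycle_apply_right) x y
        (Equiv.Perm.SameCycle.refl _ _)
    have hm : ∀ z, π z ≠ z := by
      intro z hz
      obtain ⟨y, hy⟩ := exists_ne z
      exact hy (h (fun w => w = z) (by
        intro w
        constructor
        · intro hw
          exact π.injective (hw.trans hz.symm)
        · rintro rfl; exact hz) z y rfl)
    refine ⟨⟨⟨0, by omega⟩, hm _, fun y _ => hsc _ _⟩, ?_⟩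
    ext z
    simp [hm z]

theorem sum_nCycles {n : ℕ} (hn : 2 ≤ n) {R : Type*} [CommRing R] (M : Fin n → Fin n → R) :
    ∑ π ∈ nCycles n, ∏ i, M i (π i) = hc M := by
  unfold nCycles hc
  rw [Finset.sum_filter]
  refine Finset.sum_congr rfl fun π _ => ?_
  by_cases h : Cyc π
  · rw [if_pos h, if_pos ((cyc_iff hn π).2 h)]
  · rw [if_neg h, if_neg (fun h' => h ((cyc_iff hn π).1 h'))]

/-- If `F` has elements `a₁, …, a_s` with `Σ aᵢ ≠ 0` and `Σ aᵢ² = 0`, then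
`HC_t` is a projection of `Q_{s+t+3}`. -/
theorem stmt12 {F : Type*} [Field F] (s : ℕ) (hs : 1 ≤ s) (a : Fin s → F)
    (ha : (∑ i : Fin s, a i) ≠ 0) (ha2 : (∑ i : Fin s, (a i) ^ 2) = 0)
    (t : ℕ) (ht : 2 ≤ t) :
    ∃ θ : Fin (s + t + 3) × Fin (s + t + 3) → MvPolynomial (Fin t × Fin t) F,
      IsProjection θ ∧ MvPolynomial.aeval θ (Q F (s + t + 3)) = HC F t := by
  classical
  obtain ⟨V, _, _, n, p, M, hnp, hcard, hP, h1, -, h3, -⟩ :=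
    gadget_s12 (F := F) (⟨0, by omega⟩ : Fin t)
      (fun i j => MvPolynomial.X (i, j)) (fun i j => Or.inl ⟨_, rfl⟩) s a
  set c : F := (∑ i : Fin s, a i)⁻¹ with hc'
  let M2 := pad (some p) 1 (pad p (MvPolynomial.C c) M)
  have hP2 : ∀ i j, IsP (M2 i j) := by
    intro i j
    rcases i with _ | _ | i <;> rcases j with _ | _ | j <;> simp only [M2, pad] <;>
      (try split_ifs) <;>
      first | exact isP_zero | exact isP_one | exact hP _ _ | exact isP_C _
  have e : Fin (s + t + 3) ≃ Option (Option V) :=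
    Fintype.equivOfCardEq (by simp [hcard]; ring)
  refine ⟨fun v => M2 (e v.1) (e v.2), fun v => hP2 _ _, ?_⟩
  have hN : 2 ≤ s + t + 3 := by omega
  have e1 : MvPolynomial.aeval (fun v : Fin (s + t + 3) × Fin (s + t + 3) => M2 (e v.1) (e v.2))
      (HC F (s + t + 3)) = HC F t := by
    simp only [HC, map_sum, map_prod, MvPolynomial.aeval_X]
    rw [sum_nCycles hN (fun i j => M2 (e i) (e j)), hc_reindex e M2, hc_pad, hc_pad, h1,
      sum_nCycles ht (fun i j => MvPolynomial.X (i, j)), one_mul, ← mul_assoc, ← map_mul,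
      hc', inv_mul_cancel₀ ha, map_one, one_mul]
  have e2 : MvPolynomial.aeval (fun v : Fin (s + t + 3) × Fin (s + t + 3) => M2 (e v.1) (e v.2))
      (HC2 F (s + t + 3)) = 0 := by
    simp only [HC2, map_sum, map_prod, map_pow, MvPolynomial.aeval_X]
    rw [show (∑ x ∈ nCycles (s + t + 3), ∏ i, M2 (e i) (e (x i)) ^ 2) = _ from
        sum_nCycles hN (fun i j => sqm M2 (e i) (e j)), hc_reindex e (sqm M2), show sqm M2 = _ from sqm_pad _ _ _, sqm_pad,
      hc_pad, hc_pad, h3, ha2]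
    simp
  rw [Q, map_add, e1, e2, add_zero]
end
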